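/- arXiv:1802.09915 — 2 statements merged into one kernel-verified Lean document; each statement's English description precedes it below -/
import Mathlib

section
/- Let δ ∈ (0,1), C₂ > 0 and fix C₁ > C₂/(1−δ). Then there exists R₁ > 0 such that for every R > R₁ and ℓ > 0 the following two comparison statements hold for continuously differentiable functions on [0,ℓ]: (i) if λ : [0,ℓ] → ℝ satisfies λ'(r) + λ(r)² ≤ C₂/(R+r)^{2+δ} for all r and λ(0) ≤ 1/R + C₂/R^{1+δ}, then λ(r) ≤ 1/(R+r) + C₁/(R+r)^{1+δ} for all r ∈ [0,ℓ]; (ii) if μ : [0,ℓ] → ℝ satisfies μ'(r) + μ(r)² ≥ −C₂/(R+r)^{2+δ} for all r and μ(0) ≥ 1/R − C₂/R^{1+δ}, then μ(r) ≥ 1/(R+r) − C₁/(R+r)^{1+δ} for all r ∈ [0,ℓ]. -/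
/-!
The function `s ↦ 1 / s + c / s ^ (1 + δ)` solves the Riccati equation exactly, with right-hand
side `((1 - δ) * c + c ^ 2 / s ^ δ) / s ^ (2 + δ)`. The strict inequality `C₂ < (1 - δ) * C₁`
therefore makes it a strict barrier: from above for `c = C₁`, where the quadratic term helps, and
from below for `c = -C₁` as soon as `s` is so large that `C₁ ^ 2 / s ^ δ` fits into the gap
`(1 - δ) * C₁ - C₂`. Where a solution touches a strict barrier the squares agree, so the Riccati
inequalities order the derivatives strictly, and this rules out a crossing.
-/

open Set Filter Topology

theorem image_le_of_deriv_right_sub_lt {f f' g g' : ℝ → ℝ} {v : ℝ → ℝ → ℝ} {a b : ℝ}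
    (hf : ContinuousOn f (Icc a b)) (hf' : ∀ x ∈ Ico a b, HasDerivWithinAt f (f' x) (Ici x) x)
    (hg : ContinuousOn g (Icc a b)) (hg' : ∀ x ∈ Ico a b, HasDerivWithinAt g (g' x) (Ici x) x)
    (ha : f a ≤ g a) (hlt : ∀ x ∈ Ico a b, f' x - v x (f x) < g' x - v x (g x)) :
    ∀ x ∈ Icc a b, f x ≤ g x :=
  image_le_of_deriv_right_lt_deriv_boundary' hf hf' ha hg hg' fun x hx heq => by
    have hlt_x := hlt x hx
    rw [heq] at hlt_x
    exact (sub_lt_sub_iff_right _).1 hlt_x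

/-- The comparison function for the Riccati inequality, in the radial variable `s = R + r`: the
paper's `f±(r)` is `riccatiBarrier δ (±C₁) (R + r)`. -/
noncomputable def riccatiBarrier (δ c s : ℝ) : ℝ :=
  1 / s + c / s ^ (1 + δ)

/-- The derivative of `riccatiBarrier δ c` at `s > 0`. -/
noncomputable def riccatiBarrierDeriv (δ c s : ℝ) : ℝ :=
  -(1 / s ^ 2) - (1 + δ) * c / s ^ (2 + δ)

section Barrier

variable {δ c s : ℝ}

theorem hasDerivAt_riccatiBarrier (hs : 0 < s) :
    HasDerivAt (riccatiBarrier δ c) (riccatiBarrierDeriv δ c s) s := by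
  have hpow : HasDerivAt (fun t : ℝ => t ^ (1 + δ)) ((1 + δ) * s ^ δ) s := by
    simpa only [add_sub_cancel_left] using
      Real.hasDerivAt_rpow_const (p := 1 + δ) (Or.inl hs.ne')
  have hquot := ((hasDerivAt_const s (1 : ℝ)).div (hasDerivAt_id s) hs.ne').add
    ((hasDerivAt_const s c).div hpow (Real.rpow_pos_of_pos hs _).ne')
  refine hquot.congr_deriv ?_
  simp only [riccatiBarrierDeriv, id_eq, Real.rpow_add hs, Real.rpow_one, Real.rpow_two]
  field_simp
  ring

theorem riccatiBarrierDeriv_add_sq (hs : 0 < s) :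
    riccatiBarrierDeriv δ c s + riccatiBarrier δ c s ^ 2 =
      ((1 - δ) * c + c ^ 2 / s ^ δ) / s ^ (2 + δ) := by
  simp only [riccatiBarrier, riccatiBarrierDeriv, Real.rpow_add hs, Real.rpow_one, Real.rpow_two]
  field_simp
  ring

theorem riccatiBarrier_mono {d : ℝ} (hs : 0 < s) (hcd : c ≤ d) :
    riccatiBarrier δ c s ≤ riccatiBarrier δ d s := by
  unfold riccatiBarrier
  gcongr

theorem riccatiBarrier_neg : riccatiBarrier δ (-c) s = 1 / s - c / s ^ (1 + δ) := by
  rw [riccatiBarrier, neg_div, ← sub_eq_add_neg]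

end Barrier

section Comparison

variable {δ c K R ℓ : ℝ} {u u' : ℝ → ℝ}

theorem hasDerivAt_riccatiBarrier_const_add (hR : 0 < R) {r : ℝ} (hr : 0 ≤ r) :
    HasDerivAt (fun t => riccatiBarrier δ c (R + t)) (riccatiBarrierDeriv δ c (R + r)) r :=
  (hasDerivAt_riccatiBarrier (by positivity)).comp_const_add R r

theorem le_riccatiBarrier_of_deriv_add_sq_le (hR : 0 < R)
    (hK : ∀ r ∈ Ico 0 ℓ, K < (1 - δ) * c + c ^ 2 / (R + r) ^ δ)
    (hu : ContinuousOn u (Icc 0 ℓ)) (hu' : ∀ r ∈ Ico 0 ℓ, HasDerivWithinAt u (u' r) (Ici r) r)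
    (hle : ∀ r ∈ Ico 0 ℓ, u' r + u r ^ 2 ≤ K / (R + r) ^ (2 + δ))
    (h0 : u 0 ≤ riccatiBarrier δ c R) :
    ∀ r ∈ Icc 0 ℓ, u r ≤ riccatiBarrier δ c (R + r) := by
  refine image_le_of_deriv_right_sub_lt (v := fun _ y => -y ^ 2) hu hu'
    (HasDerivAt.continuousOn fun r hr => hasDerivAt_riccatiBarrier_const_add hR hr.1)
    (fun r hr => (hasDerivAt_riccatiBarrier_const_add hR hr.1).hasDerivWithinAt)
    (by rwa [add_zero]) fun r hr => ?_
  have hs : 0 < R + r := add_pos_of_pos_of_nonneg hR hr.1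
  simp only [sub_neg_eq_add]
  calc u' r + u r ^ 2 ≤ K / (R + r) ^ (2 + δ) := hle r hr
    _ < ((1 - δ) * c + c ^ 2 / (R + r) ^ δ) / (R + r) ^ (2 + δ) := by gcongr; exact hK r hr
    _ = riccatiBarrierDeriv δ c (R + r) + riccatiBarrier δ c (R + r) ^ 2 :=
      (riccatiBarrierDeriv_add_sq hs).symm

theorem riccatiBarrier_le_of_le_deriv_add_sq (hR : 0 < R)
    (hK : ∀ r ∈ Ico 0 ℓ, (1 - δ) * c + c ^ 2 / (R + r) ^ δ < K)
    (hu : ContinuousOn u (Icc 0 ℓ)) (hu' : ∀ r ∈ Ico 0 ℓ, HasDerivWithinAt u (u' r) (Ici r) r)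
    (hle : ∀ r ∈ Ico 0 ℓ, K / (R + r) ^ (2 + δ) ≤ u' r + u r ^ 2)
    (h0 : riccatiBarrier δ c R ≤ u 0) :
    ∀ r ∈ Icc 0 ℓ, riccatiBarrier δ c (R + r) ≤ u r := by
  refine image_le_of_deriv_right_sub_lt (v := fun _ y => -y ^ 2)
    (HasDerivAt.continuousOn fun r hr => hasDerivAt_riccatiBarrier_const_add hR hr.1)
    (fun r hr => (hasDerivAt_riccatiBarrier_const_add hR hr.1).hasDerivWithinAt) hu hu'
    (by rwa [add_zero]) fun r hr => ?_
  have hs : 0 < R + r := add_pos_of_pos_of_nonneg hR hr.1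
  simp only [sub_neg_eq_add]
  calc riccatiBarrierDeriv δ c (R + r) + riccatiBarrier δ c (R + r) ^ 2
      = ((1 - δ) * c + c ^ 2 / (R + r) ^ δ) / (R + r) ^ (2 + δ) := riccatiBarrierDeriv_add_sq hs
    _ < K / (R + r) ^ (2 + δ) := by gcongr; exact hK r hr
    _ ≤ u' r + u r ^ 2 := hle r hr

end Comparison

theorem exists_pos_forall_ge_div_rpow_lt {δ ε : ℝ} (hδ : 0 < δ) (hε : 0 < ε) (a : ℝ) :
    ∃ S > (0 : ℝ), ∀ s ≥ S, a / s ^ δ < ε := by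
  have hlim : Tendsto (fun s : ℝ => a / s ^ δ) atTop (𝓝 0) :=
    tendsto_const_nhds.div_atTop (tendsto_rpow_atTop hδ)
  obtain ⟨S, hS⟩ :=
    ((eventually_gt_atTop 0).and (hlim.eventually_lt_const hε)).exists_forall_of_atTop
  exact ⟨S, (hS S le_rfl).1, fun s hs => (hS s hs).2⟩

theorem stmt_1_general {δ C₁ C₂ : ℝ} (hδ : 0 < δ) (hC : C₂ ≤ C₁) (hgap : C₂ < (1 - δ) * C₁) :
    ∃ R₁ > (0 : ℝ), ∀ R > R₁, ∀ ℓ : ℝ,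
      (∀ lam lam' : ℝ → ℝ, ContinuousOn lam (Icc 0 ℓ) →
        (∀ r ∈ Ico 0 ℓ, HasDerivWithinAt lam (lam' r) (Ici r) r) →
        (∀ r ∈ Ico 0 ℓ, lam' r + lam r ^ 2 ≤ C₂ / (R + r) ^ (2 + δ)) →
        lam 0 ≤ 1 / R + C₂ / R ^ (1 + δ) →
        ∀ r ∈ Icc 0 ℓ, lam r ≤ 1 / (R + r) + C₁ / (R + r) ^ (1 + δ)) ∧
      (∀ mu mu' : ℝ → ℝ, ContinuousOn mu (Icc 0 ℓ) →
        (∀ r ∈ Ico 0 ℓ, HasDerivWithinAt mu (mu' r) (Ici r) r) →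
        (∀ r ∈ Ico 0 ℓ, -(C₂ / (R + r) ^ (2 + δ)) ≤ mu' r + mu r ^ 2) →
        1 / R - C₂ / R ^ (1 + δ) ≤ mu 0 →
        ∀ r ∈ Icc 0 ℓ, 1 / (R + r) - C₁ / (R + r) ^ (1 + δ) ≤ mu r) := by
  obtain ⟨R₁, hR₁, hsmall⟩ := exists_pos_forall_ge_div_rpow_lt hδ (sub_pos.2 hgap) (C₁ ^ 2)
  refine ⟨R₁, hR₁, fun R hR ℓ => ?_⟩
  have hR0 : 0 < R := hR₁.trans hR
  simp only [← neg_div, ← riccatiBarrier_neg]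
  refine ⟨fun lam lam' hlam hlam' hle h0 => ?_, fun mu mu' hmu hmu' hle h0 => ?_⟩
  · refine le_riccatiBarrier_of_deriv_add_sq_le hR0 (fun r hr => ?_) hlam hlam' hle
      (h0.trans (riccatiBarrier_mono hR0 hC))
    have hs : 0 < R + r := add_pos_of_pos_of_nonneg hR0 hr.1
    exact lt_add_of_lt_of_nonneg hgap (by positivity)
  · refine riccatiBarrier_le_of_le_deriv_add_sq hR0 (fun r hr => ?_) hmu hmu' hle
      ((riccatiBarrier_mono hR0 (neg_le_neg hC)).trans h0)
    have hquad : C₁ ^ 2 / (R + r) ^ δ < (1 - δ) * C₁ - C₂ := hsmall _ (by linarith [hr.1])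
    rw [neg_sq]
    linarith

/-- Riccati comparison (Lemma 4.3): for `δ ∈ (0,1)`, `C₂ > 0` and `C₁ > C₂/(1-δ)`,
there is `R₁ > 0` such that for all `R > R₁` and `ℓ > 0`, solutions of the Riccati
differential inequalities on `[0,ℓ]` are bounded by the comparison functions
`f±(r) = 1/(R+r) ± C₁/(R+r)^{1+δ}`. -/
theorem stmt_1 (δ C₁ C₂ : ℝ) (hδ : δ ∈ Set.Ioo (0:ℝ) 1) (hC₂ : 0 < C₂)
    (hC₁ : C₂ / (1 - δ) < C₁) :
    ∃ R₁ > (0:ℝ), ∀ R > R₁, ∀ ℓ > (0:ℝ),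
      (∀ lam lam' : ℝ → ℝ,
        (∀ r ∈ Set.Icc (0:ℝ) ℓ, HasDerivAt lam (lam' r) r) →
        (∀ r ∈ Set.Icc (0:ℝ) ℓ, lam' r + (lam r)^2 ≤ C₂ / (R + r) ^ ((2:ℝ) + δ)) →
        lam 0 ≤ 1 / R + C₂ / R ^ ((1:ℝ) + δ) →
        ∀ r ∈ Set.Icc (0:ℝ) ℓ, lam r ≤ 1 / (R + r) + C₁ / (R + r) ^ ((1:ℝ) + δ)) ∧
      (∀ mu mu' : ℝ → ℝ,
        (∀ r ∈ Set.Icc (0:ℝ) ℓ, HasDerivAt mu (mu' r) r) →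
        (∀ r ∈ Set.Icc (0:ℝ) ℓ, -(C₂ / (R + r) ^ ((2:ℝ) + δ)) ≤ mu' r + (mu r)^2) →
        1 / R - C₂ / R ^ ((1:ℝ) + δ) ≤ mu 0 →
        ∀ r ∈ Set.Icc (0:ℝ) ℓ, 1 / (R + r) - C₁ / (R + r) ^ ((1:ℝ) + δ) ≤ mu r) := by
  have hδ' : 0 < 1 - δ := sub_pos.2 hδ.2
  have hC : C₂ ≤ C₁ := (le_div_self hC₂.le hδ' (sub_le_self 1 hδ.1.le)).trans hC₁.le
  obtain ⟨R₁, hR₁, hcomp⟩ := stmt_1_general hδ.1 hC ((div_lt_iff₀' hδ').1 hC₁)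
  refine ⟨R₁, hR₁, fun R hR ℓ _ => ⟨fun lam lam' hlam hle => ?_, fun mu mu' hmu hle => ?_⟩⟩
  · exact (hcomp R hR ℓ).1 lam lam' (HasDerivAt.continuousOn hlam)
      (fun r hr => (hlam r (Ico_subset_Icc_self hr)).hasDerivWithinAt)
      fun r hr => hle r (Ico_subset_Icc_self hr)
  · exact (hcomp R hR ℓ).2 mu mu' (HasDerivAt.continuousOn hmu)
      (fun r hr => (hmu r (Ico_subset_Icc_self hr)).hasDerivWithinAt)
      fun r hr => hle r (Ico_subset_Icc_self hr)
end

section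
/- Let a ∈ ℝ with a ≠ 0, and let W : ℝ³ → ℝ³ be a smooth vector field satisfying curl W = a·W on all of ℝ³, i.e. ∂₂W₃ − ∂₃W₂ = aW₁, ∂₃W₁ − ∂₁W₃ = aW₂, ∂₁W₂ − ∂₂W₁ = aW₃. If ∫_{|x| ≥ R} |W(x)|² dx < ∞ for some R ≥ 0, then W ≡ 0 on ℝ³. -/
open MeasureTheory

/-- Euclidean partial derivative of a scalar function on `ℝ³` in the `i`-th
coordinate direction. -/
noncomputable def pd (i : Fin 3) (f : EuclideanSpace ℝ (Fin 3) → ℝ)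
    (x : EuclideanSpace ℝ (Fin 3)) : ℝ :=
  fderiv ℝ f x (EuclideanSpace.single i 1)

/-!
A curl eigenfield `W` with nonzero eigenvalue is divergence free, and the antisymmetric part of its
derivative annihilates `W`, because `curl W × W = 0`. In dimension `n` these two facts alone say
that the Pohozaev field `⟪W, x⟫ W - ½ ‖W‖² x` has divergence `(1 - n / 2) ‖W‖²`. This field is
bounded by `3/2 ‖x‖ ‖W‖²`, and dilated cutoffs `χ (t x)` have gradients of size `O(1 / ‖x‖)`
supported far out as `t → 0`, so the total divergence vanishes as soon as `‖W‖²` is integrable.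
For `n ≠ 2` this forces `W = 0`.
-/

open Filter Topology Module InnerProductSpace
open scoped ContDiff Matrix

section Dilation

variable {E : Type*} [NormedAddCommGroup E] [NormedSpace ℝ E] [MeasurableSpace E] [BorelSpace E]
  {μ : Measure E}

theorem tendsto_integral_comp_smul_mul {χ g : E → ℝ} {C : ℝ} (hχ : Continuous χ)
    (hC : ∀ x, ‖χ x‖ ≤ C) (hg : Integrable g μ) :
    Tendsto (fun t : ℝ => ∫ x, χ (t • x) * g x ∂μ) (𝓝 0) (𝓝 (χ 0 * ∫ x, g x ∂μ)) := by
  rw [← integral_const_mul]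
  refine tendsto_integral_filter_of_dominated_convergence (fun x => C * ‖g x‖)
    (.of_forall fun t => ?_) (.of_forall fun t => .of_forall fun x => ?_) (hg.norm.const_mul C)
    (.of_forall fun x => ?_)
  · have : Continuous fun x => χ (t • x) := by fun_prop
    exact this.aestronglyMeasurable.mul hg.aestronglyMeasurable
  · rw [norm_mul]
    exact mul_le_mul_of_nonneg_right (hC _) (norm_nonneg _)
  · have : Continuous fun t : ℝ => χ (t • x) * g x := by fun_prop
    simpa using this.tendsto 0

theorem tendsto_integral_fderiv_comp_smul {χ g : E → ℝ} {F : E → E} (hχ : ContDiff ℝ 1 χ)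
    (hc : HasCompactSupport χ) (hg : Integrable g μ) (hF : Continuous F)
    (hFg : ∀ x, ‖F x‖ ≤ ‖x‖ * g x) :
    Tendsto (fun t : ℝ => ∫ x, fderiv ℝ (fun y => χ (t • y)) x (F x) ∂μ) (𝓝 0) (𝓝 0) := by
  have hχ' : Continuous (fderiv ℝ χ) := hχ.continuous_fderiv one_ne_zero
  obtain ⟨C, hC⟩ := (hc.fderiv ℝ).norm.mul_right (f' := fun y => ‖y‖)
    |>.exists_bound_of_continuous (hχ'.norm.mul continuous_norm)
  simp only [fderiv_comp_smul, smul_apply, smul_eq_mul]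
  rw [← integral_zero E ℝ (μ := μ)]
  refine tendsto_integral_filter_of_dominated_convergence (fun x => C * ‖g x‖)
    (.of_forall fun t => ?_) (.of_forall fun t => .of_forall fun x => ?_) (hg.norm.const_mul C)
    (.of_forall fun x => ?_)
  · have : Continuous fun x => t * fderiv ℝ χ (t • x) (F x) := by fun_prop
    exact this.aestronglyMeasurable
  · calc ‖t * fderiv ℝ χ (t • x) (F x)‖
        ≤ ‖t‖ * (‖fderiv ℝ χ (t • x)‖ * (‖x‖ * ‖g x‖)) := by
          rw [norm_mul]
          gcongr
          refine (ContinuousLinearMap.le_opNorm _ _).trans ?_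
          gcongr
          exact (hFg x).trans (by gcongr; exact le_abs_self _)
      _ = ‖‖fderiv ℝ χ (t • x)‖ * ‖t • x‖‖ * ‖g x‖ := by
          rw [norm_mul, norm_norm, norm_norm, norm_smul]; ring
      _ ≤ C * ‖g x‖ := by gcongr; exact hC _
  · have : Continuous fun t : ℝ => t * fderiv ℝ χ (t • x) (F x) := by fun_prop
    simpa using this.tendsto 0

end Dilation

section Divergence

variable {E : Type*} [NormedAddCommGroup E] [NormedSpace ℝ E] [FiniteDimensional ℝ E]

/-- The trace as a continuous linear functional on the endomorphisms of a finite-dimensional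
space. -/
noncomputable def traceCLM (E : Type*) [NormedAddCommGroup E] [NormedSpace ℝ E]
    [FiniteDimensional ℝ E] : (E →L[ℝ] E) →L[ℝ] ℝ :=
  LinearMap.toContinuousLinearMap (LinearMap.trace ℝ E ∘ₗ ContinuousLinearMap.coeLM ℝ)

/-- The divergence of a vector field, encoded as the trace of its Fréchet derivative; it is `0` by
convention at points of non-differentiability. -/
noncomputable def divergence (F : E → E) (x : E) : ℝ :=
  traceCLM E (fderiv ℝ F x)

theorem traceCLM_smulRight (f : E →L[ℝ] ℝ) (v : E) : traceCLM E (f.smulRight v) = f v :=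
  LinearMap.trace_smulRight (f : E →ₗ[ℝ] ℝ) v

theorem traceCLM_id : traceCLM E (ContinuousLinearMap.id ℝ E) = finrank ℝ E :=
  LinearMap.trace_id ℝ E

theorem continuous_divergence {F : E → E} (hF : ContDiff ℝ 1 F) :
    Continuous (divergence F) :=
  (traceCLM E).continuous.comp (hF.continuous_fderiv one_ne_zero)

theorem divergence_id (x : E) : divergence (fun y : E => y) x = finrank ℝ E := by
  rw [divergence, fderiv_fun_id, traceCLM_id]

theorem divergence_sub {F G : E → E} {x : E} (hF : DifferentiableAt ℝ F x)
    (hG : DifferentiableAt ℝ G x) :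
    divergence (fun y => F y - G y) x = divergence F x - divergence G x := by
  rw [divergence, fderiv_fun_sub hF hG, map_sub]; rfl

theorem divergence_smul {f : E → ℝ} {F : E → E} {x : E} (hf : DifferentiableAt ℝ f x)
    (hF : DifferentiableAt ℝ F x) :
    divergence (fun y => f y • F y) x = f x * divergence F x + fderiv ℝ f x (F x) := by
  rw [divergence, fderiv_fun_smul hf hF, map_add, map_smul, traceCLM_smulRight]; rfl

variable [MeasurableSpace E] [BorelSpace E] {μ : Measure E} [μ.IsAddHaarMeasure]

theorem integral_fderiv_eq_zero {V : Type*} [NormedAddCommGroup V] [NormedSpace ℝ V]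
    {F : E → V} (hF : ContDiff ℝ 1 F) (hc : HasCompactSupport F) :
    ∫ x, fderiv ℝ F x ∂μ = 0 := by
  have hF' : Integrable (fderiv ℝ F) μ :=
    (hF.continuous_fderiv one_ne_zero).integrable_of_hasCompactSupport (hc.fderiv ℝ)
  ext v
  rw [ContinuousLinearMap.integral_apply hF']
  simpa using integral_smul_fderiv_eq_neg_fderiv_smul_of_integrable (μ := μ) (𝕜 := ℝ)
    (f := fun _ => 1) (g := F) (v := v) (by simp) (by simpa using hF'.apply_continuousLinearMap v)
    (by simpa using hF.continuous.integrable_of_hasCompactSupport hc) (by fun_prop)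
    fun x _ => hF.differentiable one_ne_zero x

theorem integral_divergence_eq_zero {F : E → E} (hF : ContDiff ℝ 1 F) (hc : HasCompactSupport F) :
    ∫ x, divergence F x ∂μ = 0 := by
  have hF' : Integrable (fderiv ℝ F) μ :=
    (hF.continuous_fderiv one_ne_zero).integrable_of_hasCompactSupport (hc.fderiv ℝ)
  simp only [divergence, (traceCLM E).integral_comp_comm hF', integral_fderiv_eq_zero hF hc,
    map_zero]

theorem integral_mul_divergence {χ : E → ℝ} {F : E → E} (hχ : ContDiff ℝ 1 χ)
    (hc : HasCompactSupport χ) (hF : ContDiff ℝ 1 F) :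
    ∫ x, χ x * divergence F x ∂μ = -∫ x, fderiv ℝ χ x (F x) ∂μ := by
  have hint : Integrable (fun x => χ x * divergence F x) μ :=
    (hχ.continuous.mul (continuous_divergence hF)).integrable_of_hasCompactSupport hc.mul_right
  have hint_fderiv : Integrable (fun x => fderiv ℝ χ x (F x)) μ :=
    ((hχ.continuous_fderiv one_ne_zero).clm_apply hF.continuous).integrable_of_hasCompactSupport
      ((hc.fderiv ℝ).mono' fun x hx => by
        contrapose! hx
        simp [image_eq_zero_of_notMem_tsupport hx])
  rw [eq_neg_iff_add_eq_zero, ← integral_add hint hint_fderiv,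
    ← integral_divergence_eq_zero (μ := μ) (hχ.smul hF) hc.smul_right]
  exact integral_congr_ae (.of_forall fun x => (divergence_smul
    (hχ.differentiable one_ne_zero x) (hF.differentiable one_ne_zero x)).symm)

theorem divergence_eq_zero_of_integral_fderiv_eq_zero {F : E → E} (hF : ContDiff ℝ 1 F)
    (h : ∀ φ : E → ℝ, ContDiff ℝ ∞ φ → HasCompactSupport φ → ∫ x, fderiv ℝ φ x (F x) ∂μ = 0)
    (x : E) : divergence F x = 0 := by
  have hcont := continuous_divergence hF
  have hae : divergence F =ᵐ[μ] 0 :=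
    ae_eq_zero_of_integral_contDiff_smul_eq_zero hcont.locallyIntegrable fun φ hφ hc => by
      simp only [smul_eq_mul, integral_mul_divergence (hφ.of_le (by simp)) hc hF, h φ hφ hc,
        neg_zero]
  exact congrFun ((hcont.ae_eq_iff_eq μ continuous_const).1 hae) x

theorem integral_divergence_eq_zero_of_norm_le {F : E → E} {g : E → ℝ} (hF : ContDiff ℝ 1 F)
    (hdiv : Integrable (divergence F) μ) (hg : Integrable g μ) (hFg : ∀ x, ‖F x‖ ≤ ‖x‖ * g x) :
    ∫ x, divergence F x ∂μ = 0 := by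
  let χ : ContDiffBump (0 : E) := default
  have hχ : ContDiff ℝ 1 χ := χ.contDiff
  have hχ_zero : χ 0 = 1 := χ.one_of_mem_closedBall (by simp [χ.rIn_pos.le])
  have hχ_le (x : E) : ‖χ x‖ ≤ 1 := (Real.norm_of_nonneg χ.nonneg).trans_le χ.le_one
  have hparts (t : ℝ) (ht : t ≠ 0) : ∫ x, χ (t • x) * divergence F x ∂μ =
      -∫ x, fderiv ℝ (fun y => χ (t • y)) x (F x) ∂μ :=
    integral_mul_divergence (by fun_prop) (χ.hasCompactSupport.comp_smul ht) hF
  have hbulk : Tendsto (fun t : ℝ => ∫ x, χ (t • x) * divergence F x ∂μ) (𝓝[≠] 0)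
      (𝓝 (∫ x, divergence F x ∂μ)) := by
    simpa only [hχ_zero, one_mul] using
      (tendsto_integral_comp_smul_mul hχ.continuous hχ_le hdiv).mono_left nhdsWithin_le_nhds
  have hflux : Tendsto (fun t : ℝ => -∫ x, fderiv ℝ (fun y => χ (t • y)) x (F x) ∂μ) (𝓝[≠] 0)
      (𝓝 0) := by
    simpa only [neg_zero] using (tendsto_integral_fderiv_comp_smul (μ := μ) hχ χ.hasCompactSupport
      hg hF.continuous hFg).neg.mono_left nhdsWithin_le_nhds
  exact tendsto_nhds_unique_of_eventuallyEq hbulk hflux (eventually_mem_nhdsWithin.mono hparts)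

end Divergence

section Pohozaev

variable {E : Type*} [NormedAddCommGroup E] [InnerProductSpace ℝ E] {W : E → E}

/-- The Pohozaev field of `W`: the contraction of the stress tensor `W ⊗ W - ½ ‖W‖² I` with the
position vector, that is, with the generator of dilations. -/
noncomputable def pohozaevField (W : E → E) (x : E) : E :=
  ⟪W x, x⟫_ℝ • W x - (‖W x‖ ^ 2 / 2) • x

theorem contDiff_pohozaevField {n : ℕ∞ω} (hW : ContDiff ℝ n W) : ContDiff ℝ n (pohozaevField W) :=
  ((hW.inner ℝ contDiff_id).smul hW).sub (((hW.norm_sq ℝ).div_const 2).smul contDiff_id)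

theorem norm_pohozaevField_le (W : E → E) (x : E) :
    ‖pohozaevField W x‖ ≤ ‖x‖ * (3 / 2 * ‖W x‖ ^ 2) :=
  calc ‖pohozaevField W x‖
      ≤ |⟪W x, x⟫_ℝ| * ‖W x‖ + ‖W x‖ ^ 2 / 2 * ‖x‖ := by
        refine (norm_sub_le _ _).trans_eq ?_
        rw [norm_smul, norm_smul, Real.norm_eq_abs, Real.norm_of_nonneg (by positivity)]
    _ ≤ ‖W x‖ * ‖x‖ * ‖W x‖ + ‖W x‖ ^ 2 / 2 * ‖x‖ := by
        gcongr; exact abs_real_inner_le_norm _ _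
    _ = ‖x‖ * (3 / 2 * ‖W x‖ ^ 2) := by ring

variable [FiniteDimensional ℝ E]

theorem divergence_pohozaevField {x : E} (hW : DifferentiableAt ℝ W x) :
    divergence (pohozaevField W) x = ⟪W x, x⟫_ℝ * divergence W x
      + (⟪fderiv ℝ W x (W x), x⟫_ℝ - ⟪fderiv ℝ W x x, W x⟫_ℝ)
      + (1 - finrank ℝ E / 2) * ‖W x‖ ^ 2 := by
  have hradial : DifferentiableAt ℝ (fun y => ⟪W y, y⟫_ℝ) x := hW.inner ℝ differentiableAt_fun_id
  have henergy : HasFDerivAt (fun y => ‖W y‖ ^ 2 / 2)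
      ((2 : ℝ)⁻¹ • 2 • (innerSL ℝ (W x)).comp (fderiv ℝ W x)) x := by
    simpa only [div_eq_inv_mul] using hW.hasFDerivAt.norm_sq.const_mul (2 : ℝ)⁻¹
  unfold pohozaevField
  rw [divergence_sub (hradial.fun_smul hW)
      (henergy.differentiableAt.fun_smul differentiableAt_fun_id), divergence_smul hradial hW,
    divergence_smul henergy.differentiableAt differentiableAt_fun_id,
    divergence_id, henergy.fderiv, fderiv_inner_apply ℝ hW differentiableAt_fun_id]
  simp only [fderiv_fun_id, ContinuousLinearMap.id_apply, real_inner_self_eq_norm_sq, smul_apply,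
    ContinuousLinearMap.comp_apply, coe_innerSL_apply, nsmul_eq_mul, Nat.cast_ofNat, smul_eq_mul,
    real_inner_comm (W x)]
  ring

variable [MeasurableSpace E] [BorelSpace E] {μ : Measure E} [μ.IsAddHaarMeasure]

theorem eq_zero_of_divergence_eq_zero_of_integrable_norm_sq (hdim : finrank ℝ E ≠ 2)
    (hW : ContDiff ℝ 1 W) (hdiv : ∀ x, divergence W x = 0)
    (hsymm : ∀ x v, ⟪fderiv ℝ W x (W x), v⟫_ℝ = ⟪fderiv ℝ W x v, W x⟫_ℝ)
    (hL2 : Integrable (fun x => ‖W x‖ ^ 2) μ) (x : E) : W x = 0 := by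
  have hdivP (y : E) : divergence (pohozaevField W) y = (1 - finrank ℝ E / 2) * ‖W y‖ ^ 2 := by
    rw [divergence_pohozaevField (hW.differentiable one_ne_zero y), hdiv, hsymm]
    ring
  have hintP : ∫ y, divergence (pohozaevField W) y ∂μ = 0 :=
    integral_divergence_eq_zero_of_norm_le (contDiff_pohozaevField hW)
      (by simpa only [funext hdivP] using hL2.const_mul _) (hL2.const_mul (3 / 2))
      (norm_pohozaevField_le W)
  have hcoeff : (1 - finrank ℝ E / 2 : ℝ) ≠ 0 := by
    rw [sub_ne_zero, ne_comm, Ne, div_eq_one_iff_eq two_ne_zero]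
    exact_mod_cast hdim
  have hint : ∫ y, ‖W y‖ ^ 2 ∂μ = 0 := by
    simpa only [hdivP, integral_const_mul, mul_eq_zero, hcoeff, false_or] using hintP
  have hzero : (fun y => ‖W y‖ ^ 2) = 0 :=
    ((hW.continuous.norm.pow 2).ae_eq_iff_eq μ continuous_const).1
      ((integral_eq_zero_iff_of_nonneg (fun _ => sq_nonneg _) hL2).1 hint)
  simpa using congrFun hzero x

end Pohozaev

theorem integrable_of_integrableOn_le_norm {E F : Type*} [NormedAddCommGroup E] [ProperSpace E]
    [MeasurableSpace E] [BorelSpace E] [NormedAddCommGroup F] {μ : Measure E}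
    [IsFiniteMeasureOnCompacts μ] {f : E → F} {R : ℝ} (hf : Continuous f)
    (hfR : IntegrableOn f {x | R ≤ ‖x‖} μ) : Integrable f μ := by
  have hcover : Metric.closedBall 0 R ∪ {x : E | R ≤ ‖x‖} = Set.univ :=
    Set.eq_univ_of_forall fun x => (le_total ‖x‖ R).imp mem_closedBall_zero_iff.2 id
  rw [← integrableOn_univ, ← hcover]
  exact (hf.continuousOn.integrableOn_compact (isCompact_closedBall 0 R)).union hfR

section SecondDerivative

variable {E : Type*} [NormedAddCommGroup E] [NormedSpace ℝ E] [MeasurableSpace E]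
  [BorelSpace E] {μ : Measure E} {φ u : E → ℝ}

theorem integrable_fderiv_mul_fderiv [IsFiniteMeasureOnCompacts μ] (hφ : ContDiff ℝ 1 φ)
    (hc : HasCompactSupport φ) (hu : ContDiff ℝ 1 u) (v w : E) :
    Integrable (fun x => fderiv ℝ φ x v * fderiv ℝ u x w) μ :=
  Continuous.integrable_of_hasCompactSupport
    (((hφ.continuous_fderiv one_ne_zero).clm_apply continuous_const).mul
      ((hu.continuous_fderiv one_ne_zero).clm_apply continuous_const))
    (hc.fderiv_apply ℝ v).mul_right

theorem integral_fderiv_mul_fderiv_comm [FiniteDimensional ℝ E] [μ.IsAddHaarMeasure]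
    (hφ : ContDiff ℝ 2 φ) (hc : HasCompactSupport φ) (hu : ContDiff ℝ 1 u) (v w : E) :
    ∫ x, fderiv ℝ φ x v * fderiv ℝ u x w ∂μ = ∫ x, fderiv ℝ φ x w * fderiv ℝ u x v ∂μ := by
  have hφ' : ContDiff ℝ 1 (fderiv ℝ φ) := hφ.fderiv_right le_rfl
  have hparts (v w : E) : ∫ x, fderiv ℝ φ x v * fderiv ℝ u x w ∂μ =
      -∫ x, fderiv ℝ (fderiv ℝ φ) x w v * u x ∂μ := by
    have hsnd (x : E) : fderiv ℝ (fun y => fderiv ℝ φ y v) x w = fderiv ℝ (fderiv ℝ φ) x w v := by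
      rw [fderiv_clm_apply (hφ'.differentiable one_ne_zero x) (by fun_prop)]
      simp
    have hφv : ContDiff ℝ 1 fun x => fderiv ℝ φ x v := by fun_prop
    have hcv : HasCompactSupport fun x => fderiv ℝ φ x v := hc.fderiv_apply ℝ v
    simp only [← hsnd]
    refine integral_mul_fderiv_eq_neg_fderiv_mul_of_integrable ?_
      (integrable_fderiv_mul_fderiv (hφ.of_le one_le_two) hc hu v w) ?_
      (fun x _ => hφv.differentiable one_ne_zero x) fun x _ => hu.differentiable one_ne_zero x
    · exact Continuous.integrable_of_hasCompactSupport
        (((hφv.continuous_fderiv one_ne_zero).clm_apply continuous_const).mul hu.continuous)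
        (hcv.fderiv_apply ℝ w).mul_right
    · exact (hφv.continuous.mul hu.continuous).integrable_of_hasCompactSupport hcv.mul_right
  have hsymm (x : E) : fderiv ℝ (fderiv ℝ φ) x w v = fderiv ℝ (fderiv ℝ φ) x v w :=
    (hφ.contDiffAt.isSymmSndFDerivAt (by simp)).eq w v
  simp only [hparts, hsymm]

end SecondDerivative

section Curl

variable {W : EuclideanSpace ℝ (Fin 3) → EuclideanSpace ℝ (Fin 3)}

/-- The curl of a vector field on `ℝ³` in Cartesian coordinates, with indices `0, 1, 2`; it is the
Hodge-star operator `*d` on the corresponding one-forms. -/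
noncomputable def curl (W : EuclideanSpace ℝ (Fin 3) → EuclideanSpace ℝ (Fin 3))
    (x : EuclideanSpace ℝ (Fin 3)) : EuclideanSpace ℝ (Fin 3) :=
  !₂[pd 1 (fun y => W y 2) x - pd 2 (fun y => W y 1) x,
    pd 2 (fun y => W y 0) x - pd 0 (fun y => W y 2) x,
    pd 0 (fun y => W y 1) x - pd 1 (fun y => W y 0) x]

theorem fderiv_apply_eq_sum_pd (f : EuclideanSpace ℝ (Fin 3) → ℝ)
    (x v : EuclideanSpace ℝ (Fin 3)) :
    fderiv ℝ f x v = ∑ i, v i * pd i f x := by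
  conv_lhs => rw [← (EuclideanSpace.basisFun (Fin 3) ℝ).sum_repr v]
  simp [pd]

theorem fderiv_euclidean_apply {E ι : Type*} [NormedAddCommGroup E] [NormedSpace ℝ E] [Finite ι]
    {F : E → EuclideanSpace ℝ ι} {x : E} (hF : DifferentiableAt ℝ F x) (v : E) (i : ι) :
    fderiv ℝ F x v i = fderiv ℝ (fun y => F y i) x v :=
  have := Fintype.ofFinite ι
  (DFunLike.congr_fun ((EuclideanSpace.proj (𝕜 := ℝ) i).hasFDerivAt.comp x
    hF.hasFDerivAt).fderiv v).symm

theorem inner_fderiv_sub_inner_fderiv_eq_curl_dot_cross {x : EuclideanSpace ℝ (Fin 3)}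
    (hW : DifferentiableAt ℝ W x) (v w : EuclideanSpace ℝ (Fin 3)) :
    ⟪fderiv ℝ W x v, w⟫_ℝ - ⟪fderiv ℝ W x w, v⟫_ℝ = curl W x ⬝ᵥ v ⨯₃ w := by
  simp only [PiLp.inner_apply, fderiv_euclidean_apply hW, fderiv_apply_eq_sum_pd,
    Fin.sum_univ_three, cross_apply, Matrix.vec3_dotProduct, curl, RCLike.inner_apply,
    conj_trivial, Matrix.cons_val]
  ring

theorem inner_fderiv_self_comm_of_curl_eq_smul {x : EuclideanSpace ℝ (Fin 3)} {a : ℝ}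
    (hW : DifferentiableAt ℝ W x) (hcurl : curl W x = a • W x) (v : EuclideanSpace ℝ (Fin 3)) :
    ⟪fderiv ℝ W x (W x), v⟫_ℝ = ⟪fderiv ℝ W x v, W x⟫_ℝ := by
  rw [← sub_eq_zero, inner_fderiv_sub_inner_fderiv_eq_curl_dot_cross hW, hcurl, WithLp.ofLp_smul,
    smul_dotProduct, dot_self_cross, smul_zero]

theorem integral_fderiv_curl_eq_zero {φ : EuclideanSpace ℝ (Fin 3) → ℝ} (hφ : ContDiff ℝ 2 φ)
    (hc : HasCompactSupport φ) (hW : ContDiff ℝ 1 W) : ∫ x, fderiv ℝ φ x (curl W x) = 0 := by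
  have hWk (k : Fin 3) : ContDiff ℝ 1 fun y => W y k := by fun_prop
  have hint (i j k : Fin 3) : Integrable fun x => pd i φ x * pd j (fun y => W y k) x :=
    integrable_fderiv_mul_fderiv (hφ.of_le one_le_two) hc (hWk k) _ _
  let jacobian (i j k : Fin 3) (x : EuclideanSpace ℝ (Fin 3)) : ℝ :=
    pd i φ x * pd j (fun y => W y k) x - pd j φ x * pd i (fun y => W y k) x
  have hjac_int (i j k : Fin 3) : Integrable (jacobian i j k) := (hint i j k).sub (hint j i k)
  have hjac_zero (i j k : Fin 3) : ∫ x, jacobian i j k x = 0 := by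
    rw [integral_sub (hint i j k) (hint j i k), sub_eq_zero]
    exact integral_fderiv_mul_fderiv_comm hφ hc (hWk k) _ _
  have hexpand : (fun x => fderiv ℝ φ x (curl W x)) =
      jacobian 0 1 2 + jacobian 1 2 0 + jacobian 2 0 1 := by
    ext x
    simp only [fderiv_apply_eq_sum_pd, Fin.sum_univ_three, curl, Matrix.cons_val, Pi.add_apply,
      jacobian]
    ring
  rw [hexpand, integral_add' ((hjac_int 0 1 2).add (hjac_int 1 2 0)) (hjac_int 2 0 1),
    integral_add' (hjac_int 0 1 2) (hjac_int 1 2 0)]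
  simp only [hjac_zero, add_zero]

-- For `W` merely `C¹` the identity `div (curl W) = 0` is only available weakly, but
-- `div W = a⁻¹ div (curl W)` is continuous, hence zero.
theorem divergence_eq_zero_of_curl_eq_smul {a : ℝ} (ha : a ≠ 0) (hW : ContDiff ℝ 1 W)
    (hcurl : ∀ x, curl W x = a • W x) (x : EuclideanSpace ℝ (Fin 3)) : divergence W x = 0 := by
  refine divergence_eq_zero_of_integral_fderiv_eq_zero (μ := volume) hW (fun φ hφ hc => ?_) x
  have hweak := integral_fderiv_curl_eq_zero (hφ.of_le (by norm_cast)) hc hW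
  simpa only [hcurl, map_smul, integral_smul, smul_eq_zero, ha, false_or] using hweak

theorem stmt_7_general {a : ℝ} (ha : a ≠ 0) (hW : ContDiff ℝ 1 W)
    (hcurl : ∀ x, curl W x = a • W x) {R : ℝ}
    (hL2 : IntegrableOn (fun x => ‖W x‖ ^ 2) {x | R ≤ ‖x‖}) (x : EuclideanSpace ℝ (Fin 3)) :
    W x = 0 :=
  eq_zero_of_divergence_eq_zero_of_integrable_norm_sq (μ := volume) (by simp) hW
    (divergence_eq_zero_of_curl_eq_smul ha hW hcurl)
    (fun y => inner_fderiv_self_comm_of_curl_eq_smul (hW.differentiable one_ne_zero y) (hcurl y))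
    (integrable_of_integrableOn_le_norm (hW.continuous.norm.pow 2) hL2) x

end Curl

/-- Euclidean instance of the main static result (Theorem 4.4 / Proposition 4.12): a
smooth vector field `W` on `ℝ³` satisfying `curl W = a W` with `a ≠ 0` which is square
integrable on an exterior region `{|x| ≥ R}` vanishes identically. -/
theorem stmt_7 (a : ℝ) (ha : a ≠ 0)
    (W : EuclideanSpace ℝ (Fin 3) → EuclideanSpace ℝ (Fin 3))
    (hW : ContDiff ℝ (⊤ : ℕ∞) W)
    (hcurl : ∀ x,
      pd 1 (fun y => W y 2) x - pd 2 (fun y => W y 1) x = a * W x 0 ∧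
      pd 2 (fun y => W y 0) x - pd 0 (fun y => W y 2) x = a * W x 1 ∧
      pd 0 (fun y => W y 1) x - pd 1 (fun y => W y 0) x = a * W x 2)
    (R : ℝ) (hR : 0 ≤ R)
    (hL2 : IntegrableOn (fun x => ‖W x‖^2) {x : EuclideanSpace ℝ (Fin 3) | R ≤ ‖x‖}) :
    ∀ x, W x = 0 :=
  stmt_7_general ha (hW.of_le (by simp))
    (fun x => by ext i; fin_cases i <;> simp [curl, hcurl x]) hL2
end
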